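/- Let f : {0,1}^m → {0,1} be a non-constant monotone function, S ⊆ {0,1}^ℓ × 𝒪 a search problem, gd a gadget with Λ = {0,1}^t, Π a protocol solving mKW_f ⊛ (S◇gd), and π₁ a live transcript of Π. Then there exist a set of matrices 𝒲 ⊆ Λ^{m×ℓ}, a set of rows R ⊆ [m], and for each W ∈ 𝒲 a nonempty set 𝒜^W ⊆ 𝒜_{π₁,W}, satisfying: (1) for every I ⊆ [m]−R, rAvgDeg_{I×[ℓ]}(𝒲|_{([m]−R)×[ℓ]}) ≥ 4^{−|I|}; (2) there is a fixed string α ∈ {0,1}^R such that a|_R = α for every a ∈ 𝒜^W and every W ∈ 𝒲; (3) for every W ∈ 𝒲, mL(𝒜^W × ℬ_{π₁,W}) > m. -/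

import Mathlib

open Classical

noncomputable section

/-! ### Deterministic communication protocols -/

/-- A deterministic communication protocol: a finite binary protocol tree whose
leaves are labeled by outputs in `O`.  At a `nodeA` vertex Alice sends a bit
(computed from her input), at a `nodeB` vertex Bob sends a bit. -/
inductive Protocol (X Y O : Type) : Type where
  | leaf : O → Protocol X Y O
  | nodeA : (X → Bool) → Protocol X Y O → Protocol X Y O → Protocol X Y O
  | nodeB : (Y → Bool) → Protocol X Y O → Protocol X Y O → Protocol X Y O

namespace Protocol

variable {X Y O : Type}

/-- The output of the protocol on an input pair. -/
def run : Protocol X Y O → X → Y → O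
  | leaf o, _, _ => o
  | nodeA h p0 p1, x, y => if h x then run p1 x y else run p0 x y
  | nodeB h p0 p1, x, y => if h y then run p1 x y else run p0 x y

/-- Depth (communication complexity) of a protocol tree. -/
def depth : Protocol X Y O → ℕ
  | leaf _ => 0
  | nodeA _ p0 p1 => max (depth p0) (depth p1) + 1
  | nodeB _ p0 p1 => max (depth p0) (depth p1) + 1

/-- Number of leaves (protocol size). -/
def leaves : Protocol X Y O → ℕ
  | leaf _ => 1
  | nodeA _ p0 p1 => leaves p0 + leaves p1
  | nodeB _ p0 p1 => leaves p0 + leaves p1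

/-- `followsA p π x` : Alice's input `x` is consistent with the partial transcript `π`,
i.e. `x` belongs to the Alice-side `𝒳_π` of the rectangle associated with the vertex `π`. -/
def followsA : Protocol X Y O → List Bool → X → Prop
  | _, [], _ => True
  | leaf _, _ :: _, _ => False
  | nodeA h p0 p1, b :: rest, x =>
      h x = b ∧ (if b then followsA p1 rest x else followsA p0 rest x)
  | nodeB _ p0 p1, b :: rest, x =>
      if b then followsA p1 rest x else followsA p0 rest x

/-- `followsB p π y` : Bob's input `y` is consistent with the partial transcript `π`,
i.e. `y` belongs to the Bob-side `𝒴_π` of the rectangle associated with the vertex `π`. -/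
def followsB : Protocol X Y O → List Bool → Y → Prop
  | _, [], _ => True
  | leaf _, _ :: _, _ => False
  | nodeA _ p0 p1, b :: rest, y =>
      if b then followsB p1 rest y else followsB p0 rest y
  | nodeB h p0 p1, b :: rest, y =>
      h y = b ∧ (if b then followsB p1 rest y else followsB p0 rest y)

/-- The subtree of the protocol reached by following a partial transcript. -/
def subtree : Protocol X Y O → List Bool → Option (Protocol X Y O)
  | p, [] => some p
  | leaf _, _ :: _ => none
  | nodeA _ p0 p1, b :: rest => if b then subtree p1 rest else subtree p0 rest
  | nodeB _ p0 p1, b :: rest => if b then subtree p1 rest else subtree p0 rest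

/-- `π` is a (partial or full) transcript of the protocol, i.e. a vertex of the protocol tree. -/
def IsTranscript (p : Protocol X Y O) (π : List Bool) : Prop :=
  (subtree p π).isSome = true

/-- `π` is a full transcript of the protocol, i.e. a root-to-leaf path. -/
def IsFullTranscript (p : Protocol X Y O) (π : List Bool) : Prop :=
  ∃ o : O, subtree p π = some (leaf o)

end Protocol

/-- A protocol solves a communication problem `S` if on every input pair it
outputs a valid output. -/
def Solves {X Y O : Type} (p : Protocol X Y O) (S : X → Y → O → Prop) : Prop :=
  ∀ x y, S x y (p.run x y)

/-- `L(S)`: minimal number of leaves of a protocol solving `S`. -/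
def Lsize {X Y O : Type} (S : X → Y → O → Prop) : ℕ :=
  sInf {k | ∃ p : Protocol X Y O, Solves p S ∧ p.leaves = k}

/-- `CC(S)`: the deterministic communication complexity (minimal depth) of `S`. -/
def CC {X Y O : Type} (S : X → Y → O → Prop) : ℕ :=
  sInf {k | ∃ p : Protocol X Y O, Solves p S ∧ p.depth = k}

/-! ### Decision trees and query complexity -/

inductive DTree (ι O : Type) : Type where
  | leaf : O → DTree ι O
  | node : ι → DTree ι O → DTree ι O → DTree ι O

namespace DTree

variable {ι O : Type}

def run : DTree ι O → (ι → Bool) → O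
  | leaf o, _ => o
  | node i t0 t1, z => if z i then run t1 z else run t0 z

def depth : DTree ι O → ℕ
  | leaf _ => 0
  | node _ t0 t1 => max (depth t0) (depth t1) + 1

end DTree

def DSolves {ι O : Type} (T : DTree ι O) (S : (ι → Bool) → O → Prop) : Prop :=
  ∀ z, S z (T.run z)

/-- `Q(S)`: the deterministic query complexity of the search problem `S`. -/
def Qcomplexity {ι O : Type} (S : (ι → Bool) → O → Prop) : ℕ :=
  sInf {k | ∃ T : DTree ι O, DSolves T S ∧ T.depth = k}

/-! ### Monotone Karchmer–Wigderson relations -/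

/-- The monotone KW relation of a rectangle `A × B`: find `i` with `x i > y i`. -/
def mKWrect {ι : Type} (A B : Set (ι → Bool)) : ↥A → ↥B → ι → Prop :=
  fun x y i => x.val i = true ∧ y.val i = false

/-- `mL(A × B)`: the monotone formula complexity of the rectangle `A × B`. -/
def mL {ι : Type} (A B : Set (ι → Bool)) : ℕ := Lsize (mKWrect A B)

/-- The monotone KW relation of a monotone function `f`. -/
def mKW {ι : Type} (f : (ι → Bool) → Bool) :
    {x : ι → Bool // f x = true} → {y : ι → Bool // f y = false} → ι → Prop :=
  fun x y i => x.val i = true ∧ y.val i = false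

/-! ### Lifted search problems, discrepancy, reductions -/

/-- The lifted search problem `S ◇ gd`. -/
def liftSP {ι Λ O : Type} (S : (ι → Bool) → O → Prop) (gd : Λ → Λ → Bool) :
    (ι → Λ) → (ι → Λ) → O → Prop :=
  fun x y o => S (fun i => gd (x i) (y i)) o

/-- The discrepancy of a gadget `gd : {0,1}^t × {0,1}^t → {0,1}`. -/
def disc {t : ℕ} (gd : (Fin t → Bool) → (Fin t → Bool) → Bool) : ℝ :=
  sSup {r : ℝ | ∃ A B : Finset (Fin t → Bool),
    r = |((((A ×ˢ B).filter fun uv => gd uv.1 uv.2 = false).card : ℝ) -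
          (((A ×ˢ B).filter fun uv => gd uv.1 uv.2 = true).card : ℝ))| /
        ((2 ^ t : ℝ) * (2 ^ t : ℝ))}

/-- A (rectangular) reduction between communication problems. -/
def Reduces {X Y O X' Y' O' : Type}
    (S : X → Y → O → Prop) (S' : X' → Y' → O' → Prop) : Prop :=
  ∃ (RA : X → X') (RB : Y → Y') (Rout : O' → O),
    ∀ x y o', S' (RA x) (RB y) o' → S x y (Rout o')

/-- An injective reduction between communication problems. -/
def ReducesInj {X Y O X' Y' O' : Type}
    (S : X → Y → O → Prop) (S' : X' → Y' → O' → Prop) : Prop :=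
  ∃ (RA : X → X') (RB : Y → Y') (Rout : O' → O),
    Function.Injective RA ∧ Function.Injective RB ∧
    ∀ x y o', S' (RA x) (RB y) o' → S x y (Rout o')

/-! ### Compositions -/

/-- `mKW_f ◇ mKW_g := mKW_{f ◇ g}` : Alice gets `X ∈ (f◇g)⁻¹(1)`, Bob gets
`Y ∈ (f◇g)⁻¹(0)`, and they must find an entry `(i,j)` with `X i j > Y i j`. -/
def diamondKW {m : ℕ} {ι : Type} (f : (Fin m → Bool) → Bool) (g : (ι → Bool) → Bool) :
    {X : Fin m → ι → Bool // f (fun i => g (X i)) = true} →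
    {Y : Fin m → ι → Bool // f (fun i => g (Y i)) = false} →
    (Fin m × ι) → Prop :=
  fun X Y e => X.val e.1 e.2 = true ∧ Y.val e.1 e.2 = false

/-- `mKW_f ⊛ mKW_g` : same inputs as `mKW_f ◇ mKW_g`, but valid outputs are entries
`(i,j)` with `a_i > b_i` and `X i j > Y i j`, where `a_i = g(X_i)`, `b_i = g(Y_i)`. -/
def starKW {m : ℕ} {ι : Type} (f : (Fin m → Bool) → Bool) (g : (ι → Bool) → Bool) :
    {X : Fin m → ι → Bool // f (fun i => g (X i)) = true} →
    {Y : Fin m → ι → Bool // f (fun i => g (Y i)) = false} →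
    (Fin m × ι) → Prop :=
  fun X Y e => g (X.val e.1) = true ∧ g (Y.val e.1) = false ∧
    X.val e.1 e.2 = true ∧ Y.val e.1 e.2 = false

/-- `mKW_f ⊛ (S ◇ gd)` : Alice gets `X ∈ Λ^{m×ℓ}` and `a ∈ f⁻¹(1)`, Bob gets
`Y ∈ Λ^{m×ℓ}` and `b ∈ f⁻¹(0)`; valid outputs are pairs `(i,o)` with `a_i > b_i`
and `o` a valid output of `S ◇ gd` on the rows `(X_i, Y_i)`. -/
def starLift {m ℓ : ℕ} {Λ O : Type} (f : (Fin m → Bool) → Bool)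
    (S : (Fin ℓ → Bool) → O → Prop) (gd : Λ → Λ → Bool) :
    ((Fin m → Fin ℓ → Λ) × {a : Fin m → Bool // f a = true}) →
    ((Fin m → Fin ℓ → Λ) × {b : Fin m → Bool // f b = false}) →
    (Fin m × O) → Prop :=
  fun Xa Yb io =>
    Xa.2.val io.1 = true ∧ Yb.2.val io.1 = false ∧
      liftSP S gd (Xa.1 io.1) (Yb.1 io.1) io.2

/-! ### Live transcripts -/

/-- `𝒜_{π,W}` : the vectors `a ∈ f⁻¹(1)` such that `(W,a)` is consistent with `π`. -/
def Aset {m ℓ : ℕ} {Λ O : Type} (f : (Fin m → Bool) → Bool)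
    (Pr : Protocol ((Fin m → Fin ℓ → Λ) × {a : Fin m → Bool // f a = true})
                   ((Fin m → Fin ℓ → Λ) × {b : Fin m → Bool // f b = false}) (Fin m × O))
    (π : List Bool) (W : Fin m → Fin ℓ → Λ) : Set (Fin m → Bool) :=
  {a | ∃ h : f a = true, Protocol.followsA Pr π (W, ⟨a, h⟩)}

/-- `ℬ_{π,W}` : the vectors `b ∈ f⁻¹(0)` such that `(W,b)` is consistent with `π`. -/
def Bset {m ℓ : ℕ} {Λ O : Type} (f : (Fin m → Bool) → Bool)
    (Pr : Protocol ((Fin m → Fin ℓ → Λ) × {a : Fin m → Bool // f a = true})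
                   ((Fin m → Fin ℓ → Λ) × {b : Fin m → Bool // f b = false}) (Fin m × O))
    (π : List Bool) (W : Fin m → Fin ℓ → Λ) : Set (Fin m → Bool) :=
  {b | ∃ h : f b = false, Protocol.followsB Pr π (W, ⟨b, h⟩)}

/-- `γ(π)` : the average over uniform `W ∈ Λ^{m×ℓ}` of `mL(𝒜_{π,W} × ℬ_{π,W})`. -/
def gammaM {m ℓ : ℕ} {Λ O : Type} [Fintype Λ] [DecidableEq Λ] (f : (Fin m → Bool) → Bool)
    (Pr : Protocol ((Fin m → Fin ℓ → Λ) × {a : Fin m → Bool // f a = true})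
                   ((Fin m → Fin ℓ → Λ) × {b : Fin m → Bool // f b = false}) (Fin m × O))
    (π : List Bool) : ℝ :=
  (∑ W : Fin m → Fin ℓ → Λ, (mL (Aset f Pr π W) (Bset f Pr π W) : ℝ)) /
    (Fintype.card (Fin m → Fin ℓ → Λ) : ℝ)

/-- A transcript is live (alive) if it is a vertex of the protocol tree and `γ(π) ≥ 4m²`. -/
def LiveT {m ℓ : ℕ} {Λ O : Type} [Fintype Λ] [DecidableEq Λ] (f : (Fin m → Bool) → Bool)
    (Pr : Protocol ((Fin m → Fin ℓ → Λ) × {a : Fin m → Bool // f a = true})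
                   ((Fin m → Fin ℓ → Λ) × {b : Fin m → Bool // f b = false}) (Fin m × O))
    (π : List Bool) : Prop :=
  Protocol.IsTranscript Pr π ∧ 4 * (m : ℝ) ^ 2 ≤ gammaM f Pr π

/-! ### Average degree -/

/-- Projection of a set of strings to the coordinates in `J`. -/
def projSet {N Λ : Type} (W : Set (N → Λ)) (J : Set N) : Set (↥J → Λ) :=
  (fun w (j : ↥J) => w j.val) '' W

/-- Relative average degree: `rAvgDeg_I(W) = (|W| / |W|_{N−I}|) / |Λ|^{|I|}`. -/
def rAvgDeg {N Λ : Type} [Fintype Λ] (W : Set (N → Λ)) (I : Set N) : ℝ :=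
  ((W.ncard : ℝ) / ((projSet W Iᶜ).ncard : ℝ)) / ((Fintype.card Λ : ℝ) ^ I.ncard)

/-- View a set of `m × ℓ` matrices as a set of strings indexed by `Fin m × Fin ℓ`. -/
def matSet {m ℓ : ℕ} {Λ : Type} (WW : Set (Fin m → Fin ℓ → Λ)) : Set (Fin m × Fin ℓ → Λ) :=
  (fun W p => W p.1 p.2) '' WW

/-! ### Hard collections -/

/-- A transcript `π` supports the collection `(𝒲, a^W, b^W)` if for every `W ∈ 𝒲`,
`(W, a^W) ∈ 𝒳_π` and `(W, b^W) ∈ 𝒴_π`. -/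
def SupportsCollection {m ℓ : ℕ} {Λ O : Type} (f : (Fin m → Bool) → Bool)
    (Pr : Protocol ((Fin m → Fin ℓ → Λ) × {a : Fin m → Bool // f a = true})
                   ((Fin m → Fin ℓ → Λ) × {b : Fin m → Bool // f b = false}) (Fin m × O))
    (π : List Bool) (WW : Set (Fin m → Fin ℓ → Λ))
    (aW bW : (Fin m → Fin ℓ → Λ) → (Fin m → Bool)) : Prop :=
  ∀ W ∈ WW, aW W ∈ Aset f Pr π W ∧ bW W ∈ Bset f Pr π W

/-- The collection `(𝒲, a^W, b^W)` is hard: there is a set `R` of revealed rows such that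
(i) every set `I` of unrevealed rows has relative average degree at least `4^{-|I|}` in the
restriction of `𝒲` to the unrevealed rows, and (ii) `a^W|_R ≤ b^{W'}|_R` for all `W, W' ∈ 𝒲`. -/
def HardCollection {m ℓ : ℕ} {Λ : Type} [Fintype Λ] (f : (Fin m → Bool) → Bool)
    (WW : Set (Fin m → Fin ℓ → Λ))
    (aW bW : (Fin m → Fin ℓ → Λ) → (Fin m → Bool)) : Prop :=
  ∃ R : Set (Fin m),
    (∀ I : Set (Fin m), I ⊆ Rᶜ →
      ((1 : ℝ) / 4) ^ I.ncard ≤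
        rAvgDeg (projSet (matSet WW) {p : Fin m × Fin ℓ | p.1 ∉ R})
          {q : ↥{p : Fin m × Fin ℓ | p.1 ∉ R} | q.val.1 ∈ I}) ∧
    (∀ W ∈ WW, ∀ W' ∈ WW, ∀ i ∈ R, aW W i ≤ bW W' i)

/-! ### CNF formulas, Nullstellensatz degree -/

/-- A clause over `ℓ` variables: a set of literals; `(i, true)` is the positive
literal `x_i`, `(i, false)` is the negative literal `¬x_i`. -/
abbrev CnfClause (ℓ : ℕ) := Finset (Fin ℓ × Bool)

/-- An assignment satisfies a clause if some literal is satisfied. -/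
def clauseSat {ℓ : ℕ} (z : Fin ℓ → Bool) (C : CnfClause ℓ) : Prop :=
  ∃ lit ∈ C, z lit.1 = lit.2

/-- The search problem `S_φ` : given an assignment, find a violated clause of `φ`. -/
def searchCNF {ℓ : ℕ} (φ : Finset (CnfClause ℓ)) :
    (Fin ℓ → Bool) → CnfClause ℓ → Prop :=
  fun z C => C ∈ φ ∧ ¬ clauseSat z C

/-- The standard polynomial encoding of a clause. -/
def clausePoly {ℓ : ℕ} (C : CnfClause ℓ) : MvPolynomial (Fin ℓ) (ZMod 2) :=
  ∏ lit ∈ C, (if lit.2 then 1 - MvPolynomial.X lit.1 else MvPolynomial.X lit.1)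

/-- The Nullstellensatz degree of a CNF contradiction `φ` over `F₂`. -/
def NSdeg {ℓ : ℕ} (φ : Finset (CnfClause ℓ)) : ℕ :=
  sInf {d : ℕ | ∃ (q : CnfClause ℓ → MvPolynomial (Fin ℓ) (ZMod 2))
      (r : Fin ℓ → MvPolynomial (Fin ℓ) (ZMod 2)),
      ((∑ C ∈ φ, clausePoly C * q C) +
        ∑ i : Fin ℓ, (MvPolynomial.X i ^ 2 - MvPolynomial.X i) * r i) = 1 ∧
      (∀ C ∈ φ, (clausePoly C * q C).totalDegree ≤ d) ∧
      (∀ i : Fin ℓ, ((MvPolynomial.X i ^ 2 - MvPolynomial.X i) * r i).totalDegree ≤ d)}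

/-- The equality gadget. -/
def eqGadget {Λ : Type} [DecidableEq Λ] : Λ → Λ → Bool := fun u v => decide (u = v)

/-! ### Semi-monotone composition -/

/-- `U_m ◇ mKW_g` : Alice gets `X`, Bob gets `Y`; with `a_i = g(X_i)`, `b_i = g(Y_i)`,
valid outputs are entries `(i,j)` with (`a_i > b_i` and `X i j > Y i j`), or
(`a_i < b_i` and `X i j < Y i j`), or (`a_i = b_i` and `X i j ≠ Y i j`); if `a = b`
the players may output the failure symbol `⊥` (here `none`). -/
def semiU {m : ℕ} {ι : Type} (g : (ι → Bool) → Bool) :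
    (Fin m → ι → Bool) → (Fin m → ι → Bool) → Option (Fin m × ι) → Prop :=
  fun X Y o =>
    match o with
    | none => ∀ i, g (X i) = g (Y i)
    | some e =>
        (g (X e.1) = true ∧ g (Y e.1) = false ∧ X e.1 e.2 = true ∧ Y e.1 e.2 = false) ∨
        (g (X e.1) = false ∧ g (Y e.1) = true ∧ X e.1 e.2 = false ∧ Y e.1 e.2 = true) ∨
        (g (X e.1) = g (Y e.1) ∧ X e.1 e.2 ≠ Y e.1 e.2)

/-! ### Razborov rank measure over F₂ -/

/-- The maximal `F₂`-rank of the restriction of `A` to an `S`-monochromatic rectangle. -/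
def monoMaxRank {X Y O : Type} [Fintype X] [Fintype Y]
    (S : X → Y → O → Prop) (A : Matrix X Y (ZMod 2)) : ℕ :=
  sSup {r : ℕ | ∃ (U : Finset X) (V : Finset Y) (o : O),
    (∀ x ∈ U, ∀ y ∈ V, S x y o) ∧
    r = (A.submatrix (Subtype.val : {x // x ∈ U} → X)
          (Subtype.val : {y // y ∈ V} → Y)).rank}

/-- The Razborov rank measure `μ_{F₂}(S, A)`. -/
def muF2 {X Y O : Type} [Fintype X] [Fintype Y]
    (S : X → Y → O → Prop) (A : Matrix X Y (ZMod 2)) : ℝ :=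
  (A.rank : ℝ) / (monoMaxRank S A : ℝ)

/-! ### Kronecker powers, pattern matrices -/

/-- The `m`-fold Kronecker power of a square matrix `B`, with index type `Fin m → ι`. -/
def kronPow {ι R : Type} [CommMonoid R] (m : ℕ) (B : Matrix ι ι R) :
    Matrix (Fin m → ι) (Fin m → ι) R :=
  Matrix.of fun x y => ∏ i, B (x i) (y i)

/-- The pattern matrix `A_{x,y} = p(eq(x₁,y₁),…,eq(x_ℓ,y_ℓ))` of a multilinear
polynomial `p` with coefficients `phat` over `F₂`. -/
def patternMatrix {Λ : Type} [DecidableEq Λ] (ℓ : ℕ)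
    (phat : Finset (Fin ℓ) → ZMod 2) : Matrix (Fin ℓ → Λ) (Fin ℓ → Λ) (ZMod 2) :=
  Matrix.of fun x y =>
    ∑ T : Finset (Fin ℓ), phat T * ∏ i ∈ T, (if x i = y i then (1 : ZMod 2) else 0)

/-! ### s-t-connectivity -/

/-- The `s`-`t`-connectivity function: the input is the adjacency matrix of a directed
graph on `n` vertices, `s = 0`, `t = n-1`; output is whether `t` is reachable from `s`. -/
def stConn (n : ℕ) : ((Fin n × Fin n) → Bool) → Bool :=
  fun E =>
    if ∀ h : 0 < n,
        Relation.ReflTransGen (fun u v : Fin n => E (u, v) = true)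
          ⟨0, h⟩ ⟨n - 1, Nat.sub_lt h Nat.one_pos⟩
      then true else false

/-! ### The matrix M of the semi-monotone composition theorem -/

/-- The matrix `M` used in the semi-monotone composition theorem, built from a matrix
`A ∈ F₂^{𝒳×𝒴}` (with `𝒳 = range xs`, `𝒴 = range ys` identified with `Fin K` via the
left inverses `ix`, `iy`). -/
def semiM {m n K : ℕ} (g : (Fin n → Bool) → Bool) (xs ys : Fin K → (Fin n → Bool))
    (ix iy : (Fin n → Bool) → Fin K) (A : Matrix (Fin K) (Fin K) (ZMod 2)) :
    Matrix (Fin m → Fin n → Bool) (Fin m → Fin n → Bool) (ZMod 2) :=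
  Matrix.of fun X Y =>
    if (fun i => g (X i)) = (fun i => g (Y i)) then 0
    else ∏ i : Fin m,
      (if g (X i) = true ∧ g (Y i) = false then A (ix (X i)) (iy (Y i))
       else if g (X i) = false ∧ g (Y i) = true then A (ix (Y i)) (iy (X i))
       else if X i = Y i then 1 else 0)

end

/-!
Call `R` revealable if some candidates agreeing with a fixed string on `R` have complexity at least
`τ` for all matrices of a set `𝒲`, and `τ` times the density of `𝒲` on the unrevealed rows exceeds
`m`. The empty set is revealable: all complexities are at most `4 ^ m`, so if every threshold `s`
were reached by a fraction at most `m / s` of the matrices, summing over `s` would bound the average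
complexity by `m` times the harmonic number of `4 ^ m`, which is less than `4 * m ^ 2`.

A maximal revealable `R` has the required properties. If `I` is a set of unrevealed rows, fixing the
rows of `I` to the most expensive string divides the complexity by at most `2 ^ |I|`, and
restricting to the most frequent such string divides the number of matrices by at most `2 ^ |I|`.
If the relative average degree of `I` were below `4 ^ (-|I|)`, dropping the rows of `I` would
increase the density by more than `4 ^ |I|`, and `R ∪ I` would be revealable as well. Since
densities are at most `1`, the complexity of every remaining matrix is greater than `m`.
-/

namespace Protocol

variable {X Y X' Y' O : Type}

/-- The protocol `p` after the inputs have been translated by `u` and `v`. -/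
def comap (u : X → X') (v : Y → Y') : Protocol X' Y' O → Protocol X Y O
  | leaf o => leaf o
  | nodeA h p0 p1 => nodeA (h ∘ u) (comap u v p0) (comap u v p1)
  | nodeB h p0 p1 => nodeB (h ∘ v) (comap u v p0) (comap u v p1)

theorem leaves_comap (u : X → X') (v : Y → Y') (p : Protocol X' Y' O) :
    (p.comap u v).leaves = p.leaves := by
  induction p with
  | leaf o => rfl
  | nodeA h p0 p1 ih0 ih1 | nodeB h p0 p1 ih0 ih1 => simp [comap, leaves, ih0, ih1]

theorem run_comap (u : X → X') (v : Y → Y') (p : Protocol X' Y' O) (x : X) (y : Y) :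
    (p.comap u v).run x y = p.run (u x) (v y) := by
  induction p with
  | leaf o => rfl
  | nodeA h p0 p1 ih0 ih1 | nodeB h p0 p1 ih0 ih1 => simp [comap, run, ih0, ih1]

/-- The protocol `p` with the roles of Alice and Bob exchanged. -/
def swap : Protocol X Y O → Protocol Y X O
  | leaf o => leaf o
  | nodeA h p0 p1 => nodeB h (swap p0) (swap p1)
  | nodeB h p0 p1 => nodeA h (swap p0) (swap p1)

theorem leaves_swap (p : Protocol X Y O) : p.swap.leaves = p.leaves := by
  induction p with
  | leaf o => rfl
  | nodeA h p0 p1 ih0 ih1 | nodeB h p0 p1 ih0 ih1 => simp [swap, leaves, ih0, ih1]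

theorem run_swap (p : Protocol X Y O) (x : X) (y : Y) : p.swap.run y x = p.run x y := by
  induction p with
  | leaf o => rfl
  | nodeA h p0 p1 ih0 ih1 | nodeB h p0 p1 ih0 ih1 => simp [swap, run, ih0, ih1]

theorem exists_run_eq_of_injective {u : X → X'} {v : Y → Y'} (hu : u.Injective)
    (hv : v.Injective) (p : Protocol X Y O) :
    ∃ q : Protocol X' Y' O, q.leaves = p.leaves ∧ ∀ x y, q.run (u x) (v y) = p.run x y := by
  induction p with
  | leaf o => exact ⟨leaf o, rfl, fun _ _ => rfl⟩
  | nodeA h p0 p1 ih0 ih1 =>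
    obtain ⟨q0, hq0, hrun0⟩ := ih0
    obtain ⟨q1, hq1, hrun1⟩ := ih1
    exact ⟨nodeA (u.extend h fun _ => false) q0 q1, by simp [leaves, hq0, hq1],
      by simp [run, hu.extend_apply, hrun0, hrun1]⟩
  | nodeB h p0 p1 ih0 ih1 =>
    obtain ⟨q0, hq0, hrun0⟩ := ih0
    obtain ⟨q1, hq1, hrun1⟩ := ih1
    exact ⟨nodeB (v.extend h fun _ => false) q0 q1, by simp [leaves, hq0, hq1],
      by simp [run, hv.extend_apply, hrun0, hrun1]⟩

/-- Alice announces `φ x`, one value of `φ` at a time, and the players continue with the protocol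
chosen by that value. -/
theorem exists_run_eq_run_apply {K : Type*} (φ : X → K) (F : K → Protocol X Y O) {s : Finset K}
    (hs : s.Nonempty) :
    ∃ p : Protocol X Y O, p.leaves = ∑ k ∈ s, (F k).leaves ∧
      ∀ x y, φ x ∈ s → p.run x y = (F (φ x)).run x y := by
  induction hs using Finset.Nonempty.cons_induction with
  | singleton k => exact ⟨F k, by simp, by simp +contextual⟩
  | cons k s hk _ ih =>
    obtain ⟨p, hp, hrun⟩ := ih
    refine ⟨nodeA (fun x => decide (φ x = k)) p (F k), ?_, fun x y hx => ?_⟩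
    · rw [leaves, hp, Finset.sum_cons, add_comm]
    · by_cases hxk : φ x = k
      · simp [run, hxk]
      · simpa [run, hxk] using hrun x y ((Finset.mem_cons.1 hx).resolve_left hxk)

theorem exists_run_eq [Fintype X] [Fintype Y] [Nonempty X] [Nonempty Y] (g : X → Y → O) :
    ∃ p : Protocol X Y O, p.leaves = Fintype.card X * Fintype.card Y ∧
      ∀ x y, p.run x y = g x y := by
  choose q hq hrun using fun x =>
    exists_run_eq_run_apply (Y := X) id (fun y => leaf (g x y)) Finset.univ_nonempty
  obtain ⟨p, hp, hprun⟩ := exists_run_eq_run_apply id (fun x => (q x).swap) Finset.univ_nonempty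
  refine ⟨p, ?_, fun x y => ?_⟩
  · simp [hp, leaves_swap, hq, leaves]
  · rw [hprun x y (Finset.mem_univ _), run_swap, id, hrun x y x (Finset.mem_univ _), id, run]

/-- `p` solves the monotone Karchmer–Wigderson relation of `A × B`. Unlike in `mKWrect`, the inputs
of `p` range over all strings, so that the same protocol can be used for several rectangles. -/
def SolvesRect {ι : Type} (p : Protocol (ι → Bool) (ι → Bool) ι) (A B : Set (ι → Bool)) : Prop :=
  ∀ a ∈ A, ∀ b ∈ B, a (p.run a b) = true ∧ b (p.run a b) = false

end Protocol

section FormulaComplexity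

variable {ι : Type} {A B : Set (ι → Bool)}

theorem mL_le_leaves {p : Protocol (ι → Bool) (ι → Bool) ι} (hp : p.SolvesRect A B) :
    mL A B ≤ p.leaves :=
  Nat.sInf_le ⟨p.comap Subtype.val Subtype.val,
    fun a b => by rw [Protocol.run_comap]; exact hp a a.2 b b.2, p.leaves_comap _ _⟩

theorem mL_empty_left_le_one [Nonempty ι] : mL ∅ B ≤ 1 :=
  mL_le_leaves (p := .leaf (Classical.arbitrary ι)) fun _ ha => absurd ha (Set.notMem_empty _)

theorem exists_true_false_of_not_le {a b : ι → Bool} (h : ¬a ≤ b) :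
    ∃ i, a i = true ∧ b i = false := by
  simpa [Pi.le_def, Bool.le_iff_imp] using h

variable [Finite ι] [Nonempty ι]

theorem exists_solvesRect_leaves_eq_four_pow (hAB : ∀ a ∈ A, ∀ b ∈ B, ¬a ≤ b) :
    ∃ p : Protocol (ι → Bool) (ι → Bool) ι, p.SolvesRect A B ∧ p.leaves = 4 ^ Nat.card ι := by
  have := Fintype.ofFinite ι
  have hout (a b : ι → Bool) : ∃ i, ¬a ≤ b → a i = true ∧ b i = false := by
    by_cases h : a ≤ b
    · exact ⟨Classical.arbitrary ι, fun h' => (h' h).elim⟩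
    · exact (exists_true_false_of_not_le h).imp fun _ hi _ => hi
  choose out hout using hout
  obtain ⟨p, hp, hrun⟩ := Protocol.exists_run_eq out
  refine ⟨p, fun a ha b hb => hrun a b ▸ hout a b (hAB a ha b hb), ?_⟩
  simp [hp, ← mul_pow]

theorem mL_le_four_pow (hAB : ∀ a ∈ A, ∀ b ∈ B, ¬a ≤ b) : mL A B ≤ 4 ^ Nat.card ι := by
  obtain ⟨p, hp, hleaves⟩ := exists_solvesRect_leaves_eq_four_pow hAB
  exact hleaves ▸ mL_le_leaves hp

theorem exists_solvesRect_leaves_eq_mL (hAB : ∀ a ∈ A, ∀ b ∈ B, ¬a ≤ b) :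
    ∃ p : Protocol (ι → Bool) (ι → Bool) ι, p.SolvesRect A B ∧ p.leaves = mL A B := by
  obtain ⟨p₀, hp₀, -⟩ := exists_solvesRect_leaves_eq_four_pow hAB
  obtain ⟨p, hp, hleaves⟩ : ∃ p : Protocol A B ι, Solves p (mKWrect A B) ∧ p.leaves = mL A B :=
    Nat.sInf_mem (s := {k | ∃ p : Protocol A B ι, Solves p (mKWrect A B) ∧ p.leaves = k})
      ⟨_, p₀.comap Subtype.val Subtype.val,
      fun a b => by rw [Protocol.run_comap]; exact hp₀ a a.2 b b.2, rfl⟩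
  obtain ⟨q, hq, hrun⟩ :=
    p.exists_run_eq_of_injective Subtype.val_injective Subtype.val_injective
  exact ⟨q, fun a ha b hb => hrun ⟨a, ha⟩ ⟨b, hb⟩ ▸ hp ⟨a, ha⟩ ⟨b, hb⟩, hq.trans hleaves⟩

theorem mL_le_sum_mL_inter_preimage {K : Type*} [Fintype K] [Nonempty K] (φ : (ι → Bool) → K)
    (hAB : ∀ a ∈ A, ∀ b ∈ B, ¬a ≤ b) : mL A B ≤ ∑ k, mL (A ∩ φ ⁻¹' {k}) B := by
  choose p hp hleaves using fun k =>
    exists_solvesRect_leaves_eq_mL (A := A ∩ φ ⁻¹' {k}) (B := B) fun a ha => hAB a ha.1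
  obtain ⟨q, hq, hrun⟩ := Protocol.exists_run_eq_run_apply φ p Finset.univ_nonempty
  simp_rw [← hleaves, ← hq]
  refine mL_le_leaves fun a ha b hb => ?_
  rw [hrun a b (Finset.mem_univ _)]
  exact hp (φ a) a ⟨ha, rfl⟩ b hb

end FormulaComplexity

section Averaging

theorem exists_le_card_mul_of_le_sum {K : Type*} [Fintype K] [Nonempty K] {n : ℕ} {g : K → ℕ}
    (h : n ≤ ∑ k, g k) : ∃ k, n ≤ Fintype.card K * g k := by
  obtain ⟨k, -, hk⟩ := Finset.univ.exists_max_image g Finset.univ_nonempty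
  exact ⟨k, h.trans (Finset.sum_le_card_nsmul _ _ _ hk)⟩

theorem exists_ncard_image_le_card_mul {Ω P K : Type*} [Finite P] [Fintype K] [Nonempty K]
    (pr : Ω → P) (s : Set Ω) (c : Ω → K) :
    ∃ k, (pr '' s).ncard ≤ Fintype.card K * (pr '' (s ∩ c ⁻¹' {k})).ncard := by
  refine exists_le_card_mul_of_le_sum ?_
  have hcover : pr '' s ⊆ ⋃ k, pr '' (s ∩ c ⁻¹' {k}) := by
    rintro _ ⟨w, hw, rfl⟩
    exact Set.mem_iUnion.2 ⟨c w, w, ⟨hw, rfl⟩, rfl⟩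
  exact (Set.ncard_le_ncard hcover).trans (Set.ncard_iUnion_le_of_fintype _)

variable {Ω : Type*} [Fintype Ω] {N : ℕ} {g : Ω → ℕ}

theorem sum_eq_sum_ncard_lt (hg : ∀ w, g w ≤ N) :
    ∑ w, g w = ∑ k ∈ Finset.range N, {w | k < g w}.ncard := by
  have hrow (w : Ω) : g w = ((Finset.range N).bipartiteAbove (fun w k => k < g w) w).card := by
    have hrange : (Finset.range N).filter (fun k => k < g w) = Finset.range (g w) := by
      ext k
      simpa using fun hk => hk.trans_le (hg w)
    rw [Finset.bipartiteAbove, hrange, Finset.card_range]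
  rw [Finset.sum_congr rfl fun w _ => hrow w,
    Finset.sum_card_bipartiteAbove_eq_sum_card_bipartiteBelow]
  refine Finset.sum_congr rfl fun k _ => ?_
  rw [Finset.bipartiteBelow, ← Set.ncard_coe_finset, Finset.coe_filter_univ]

/-- Otherwise the `k`-th summand of the layer-cake sum is at most `c / (k + 1)`. -/
theorem exists_lt_mul_ncard_le {c : ℝ} (hg : ∀ w, g w ≤ N)
    (h : c * (harmonic N : ℝ) < ∑ w, (g w : ℝ)) :
    ∃ s : ℕ, c < s * ({w | s ≤ g w}.ncard : ℝ) := by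
  by_contra! hle
  refine h.not_ge ?_
  calc ∑ w, (g w : ℝ) = ∑ k ∈ Finset.range N, ({w | k < g w}.ncard : ℝ) := by
        exact_mod_cast sum_eq_sum_ncard_lt hg
    _ ≤ ∑ k ∈ Finset.range N, c * ((k : ℝ) + 1)⁻¹ := Finset.sum_le_sum fun k _ => by
        rw [← div_eq_mul_inv, le_div_iff₀' (by positivity)]
        exact_mod_cast hle (k + 1)
    _ = c * (harmonic N : ℝ) := by simp [harmonic, Finset.mul_sum]

theorem harmonic_four_pow_lt {m : ℕ} (hm : 0 < m) : (harmonic (4 ^ m) : ℝ) < 4 * m := by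
  have hlog : Real.log ((4 ^ m : ℕ) : ℝ) = m * (2 * Real.log 2) := by
    rw [show 4 ^ m = 2 ^ (2 * m) by rw [pow_mul]; rfl]
    push_cast
    rw [Real.log_pow]
    push_cast
    ring
  have hm1 : (1 : ℝ) ≤ m := by exact_mod_cast hm
  calc (harmonic (4 ^ m) : ℝ) ≤ 1 + m * (2 * Real.log 2) := hlog ▸ harmonic_le_one_add_log _
    _ < 4 * m := by nlinarith [Real.log_two_lt_d9]

end Averaging

section Projection

variable {N Λ : Type}

theorem ncard_projSet_projSet (T : Set (N → Λ)) (J : Set N) (K : Set J) :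
    (projSet (projSet T J) K).ncard = (projSet T (Subtype.val '' K)).ncard := by
  let e : K ≃ (Subtype.val '' K : Set N) := Equiv.Set.image _ K Subtype.val_injective
  have hproj : projSet (projSet T J) K =
      (fun w : (Subtype.val '' K : Set N) → Λ => w ∘ e) '' projSet T (Subtype.val '' K) := by
    simp only [projSet, Set.image_image]
    rfl
  rw [hproj, Set.ncard_image_of_injective _ e.surjective.injective_comp_right]

variable [Fintype Λ]

/-- The fraction of `Λ^J` covered by the projection of `T` to the coordinates in `J`. -/
noncomputable def projDensity (T : Set (N → Λ)) (J : Set N) : ℝ :=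
  (projSet T J).ncard / (Fintype.card Λ : ℝ) ^ J.ncard

theorem projDensity_nonneg (T : Set (N → Λ)) (J : Set N) : 0 ≤ projDensity T J := by
  unfold projDensity
  positivity

variable [Finite N]

theorem projDensity_le_one (T : Set (N → Λ)) (J : Set N) : projDensity T J ≤ 1 := by
  refine div_le_one_of_le₀ ?_ (by positivity)
  have h := Set.ncard_le_card (projSet T J)
  rw [Nat.card_fun, Nat.card_eq_fintype_card, Nat.card_coe_set_eq] at h
  exact_mod_cast h

theorem projDensity_pos_iff [Nonempty Λ] {T : Set (N → Λ)} {J : Set N} :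
    0 < projDensity T J ↔ T.Nonempty := by
  have hcard : (0 : ℝ) < (Fintype.card Λ : ℝ) ^ J.ncard :=
    pow_pos (Nat.cast_pos.2 Fintype.card_pos) _
  rw [projDensity, div_pos_iff_of_pos_right hcard, Nat.cast_pos, Set.ncard_pos, projSet,
    Set.image_nonempty]

theorem rAvgDeg_projSet [Nonempty Λ] (T : Set (N → Λ)) (J : Set N) (I : Set J) :
    rAvgDeg (projSet T J) I = projDensity T J / projDensity T (J \ Subtype.val '' I) := by
  have hJ : J.ncard = (J \ Subtype.val '' I).ncard + I.ncard := by
    rw [← Set.ncard_sdiff_add_ncard_of_subset (Subtype.coe_image_subset J I),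
      Set.ncard_image_of_injective _ Subtype.val_injective]
  rw [rAvgDeg, projDensity, projDensity, ncard_projSet_projSet, Set.image_val_compl, hJ, pow_add]
  field_simp

end Projection

/-- The entries outside the revealed rows `R` of a matrix with columns indexed by `κ`. -/
abbrev unrevealed {ι : Type} (κ : Type) (R : Set ι) : Set (ι × κ) := {p | p.1 ∉ R}

theorem unrevealed_diff_image {ι κ : Type} (R I : Set ι) :
    unrevealed κ R \ Subtype.val '' {q : unrevealed κ R | q.val.1 ∈ I} = unrevealed κ (R ∪ I) := by
  ext p
  constructor
  · rintro ⟨hR, hI⟩ (h | h)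
    exacts [hR h, hI ⟨⟨p, hR⟩, h, rfl⟩]
  · intro h
    refine ⟨fun hR => h (Or.inl hR), ?_⟩
    rintro ⟨q, hq, rfl⟩
    exact h (Or.inr hq)

theorem unrevealed_empty {ι κ : Type} : unrevealed κ (∅ : Set ι) = Set.univ := by
  simp [unrevealed]

theorem projSet_matSet {m ℓ : ℕ} {Λ : Type} (WW : Set (Fin m → Fin ℓ → Λ))
    (J : Set (Fin m × Fin ℓ)) :
    projSet (matSet WW) J = (fun W (j : J) => W j.val.1 j.val.2) '' WW :=
  Set.image_image _ _ _

theorem projDensity_matSet_univ {m ℓ : ℕ} {Λ : Type} [Fintype Λ] (WW : Set (Fin m → Fin ℓ → Λ)) :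
    projDensity (matSet WW) Set.univ = WW.ncard / Fintype.card (Fin m → Fin ℓ → Λ) := by
  have hinj : Function.Injective fun (W : Fin m → Fin ℓ → Λ)
      (j : (Set.univ : Set (Fin m × Fin ℓ))) => W j.val.1 j.val.2 :=
    fun V W h => funext₂ fun i j => congrFun h ⟨(i, j), Set.mem_univ _⟩
  rw [projDensity, projSet_matSet, Set.ncard_image_of_injective _ hinj]
  simp [Set.ncard_univ, ← pow_mul, mul_comm]

theorem eqOn_piecewise_union_iff {ι K : Type*} {R I : Set ι} (hI : I ⊆ Rᶜ) {a α β : ι → K} :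
    Set.EqOn a (I.piecewise β α) (R ∪ I) ↔ Set.EqOn a α R ∧ Set.EqOn a β I := by
  have hdiff : (R ∪ I) ∩ Iᶜ = R := by
    rw [Set.union_inter_distrib_right, Set.inter_compl_self, Set.union_empty,
      Set.inter_eq_left.2 (Set.subset_compl_comm.1 hI)]
  rw [Set.eqOn_comm, Set.eqOn_piecewise, Set.union_inter_cancel_right, hdiff, and_comm,
    Set.eqOn_comm, Set.eqOn_comm (f₁ := β)]

theorem exists_mL_le_mul_mL_inter_eqOn {ι : Type} {Ω P : Type*} [Finite ι] [Nonempty ι] [Finite P]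
    (pr : Ω → P) {A B : Ω → Set (ι → Bool)} (hAB : ∀ w, ∀ a ∈ A w, ∀ b ∈ B w, ¬a ≤ b)
    (s : Set Ω) (I : Set ι) :
    ∃ β : ι → Bool, ∃ s' ⊆ s, (pr '' s).ncard ≤ 2 ^ I.ncard * (pr '' s').ncard ∧
      ∀ w ∈ s', mL (A w) (B w) ≤ 2 ^ I.ncard * mL (A w ∩ {a | Set.EqOn a β I}) (B w) := by
  have := Fintype.ofFinite I
  have hcard : Fintype.card (I → Bool) = 2 ^ I.ncard := by
    rw [← Nat.card_eq_fintype_card, Nat.card_fun, Nat.card_coe_set_eq, Nat.card_eq_fintype_card,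
      Fintype.card_bool]
  choose c hc using fun w => exists_le_card_mul_of_le_sum
    (mL_le_sum_mL_inter_preimage (I.domRestrict (π := fun _ => Bool)) (hAB w))
  obtain ⟨κ, hκ⟩ := exists_ncard_image_le_card_mul pr s c
  obtain ⟨β, rfl⟩ : ∃ β : ι → Bool, I.domRestrict β = κ :=
    Subtype.val_injective.surjective_comp_right κ
  refine ⟨β, s ∩ c ⁻¹' {I.domRestrict β}, Set.inter_subset_left, hcard ▸ hκ, ?_⟩
  rintro w ⟨-, hw : c w = _⟩
  have hpre : I.domRestrict (π := fun _ => Bool) ⁻¹' {I.domRestrict β} = {a | Set.EqOn a β I} :=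
    Set.ext fun a => Set.domRestrict_eq_domRestrict_iff
  simpa only [hcard, hw, hpre] using hc w

/-- The invariant of the procedure that reveals rows: after fixing the rows in `R` of the candidates
to `α`, every matrix of `WW` retains complexity at least `τ`, and `τ` outweighs the density lost by
`WW` on the unrevealed rows. -/
structure IsRevealState {m ℓ : ℕ} {Λ : Type} [Fintype Λ]
    (A B : (Fin m → Fin ℓ → Λ) → Set (Fin m → Bool)) (R : Set (Fin m)) (α : Fin m → Bool)
    (WW : Set (Fin m → Fin ℓ → Λ)) (τ : ℝ) : Prop where
  le_mL : ∀ W ∈ WW, τ ≤ mL (A W ∩ {a | Set.EqOn a α R}) (B W)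
  lt_mul_projDensity : m < τ * projDensity (matSet WW) (unrevealed (Fin ℓ) R)

namespace IsRevealState

variable {m ℓ : ℕ} {Λ : Type} [Fintype Λ] {A B : (Fin m → Fin ℓ → Λ) → Set (Fin m → Bool)}
  {R : Set (Fin m)} {α : Fin m → Bool} {WW : Set (Fin m → Fin ℓ → Λ)} {τ : ℝ}

theorem pos (h : IsRevealState A B R α WW τ) : 0 < τ :=
  pos_of_mul_pos_left ((Nat.cast_nonneg m).trans_lt h.lt_mul_projDensity) (projDensity_nonneg _ _)

theorem projDensity_pos (h : IsRevealState A B R α WW τ) :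
    0 < projDensity (matSet WW) (unrevealed (Fin ℓ) R) :=
  pos_of_mul_pos_right ((Nat.cast_nonneg m).trans_lt h.lt_mul_projDensity) h.pos.le

theorem lt_mL (h : IsRevealState A B R α WW τ) {W : Fin m → Fin ℓ → Λ} (hW : W ∈ WW) :
    m < mL (A W ∩ {a | Set.EqOn a α R}) (B W) := by
  have hm : (m : ℝ) < τ :=
    h.lt_mul_projDensity.trans_le (mul_le_of_le_one_right h.pos.le (projDensity_le_one _ _))
  exact_mod_cast hm.trans_le (h.le_mL W hW)

variable [Nonempty Λ]

theorem projDensity_lt_mul_of_rAvgDeg_lt (h : IsRevealState A B R α WW τ) {I : Set (Fin m)} {c : ℝ}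
    (hc : rAvgDeg (projSet (matSet WW) (unrevealed (Fin ℓ) R)) {q | q.val.1 ∈ I} < c) :
    projDensity (matSet WW) (unrevealed (Fin ℓ) R) <
      c * projDensity (matSet WW) (unrevealed (Fin ℓ) (R ∪ I)) := by
  have hpos : 0 < projDensity (matSet WW) (unrevealed (Fin ℓ) (R ∪ I)) :=
    projDensity_pos_iff.2 (projDensity_pos_iff.1 h.projDensity_pos)
  rwa [rAvgDeg_projSet, unrevealed_diff_image, div_lt_iff₀ hpos] at hc

variable [NeZero m]

theorem exists_initial (hAB : ∀ W, ∀ a ∈ A W, ∀ b ∈ B W, ¬a ≤ b)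
    (havg : 4 * (m : ℝ) ^ 2 ≤
      (∑ W, (mL (A W) (B W) : ℝ)) / (Fintype.card (Fin m → Fin ℓ → Λ) : ℝ)) (α : Fin m → Bool) :
    ∃ WW τ, IsRevealState A B ∅ α WW τ := by
  set c : ℝ := (Fintype.card (Fin m → Fin ℓ → Λ) : ℝ)
  have hc : 0 < c := Nat.cast_pos.2 Fintype.card_pos
  have hm : 0 < m := NeZero.pos m
  have hsum : m * c * (harmonic (4 ^ m) : ℝ) < ∑ W, (mL (A W) (B W) : ℝ) :=
    calc m * c * (harmonic (4 ^ m) : ℝ) < m * c * (4 * m) := by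
          gcongr
          exact harmonic_four_pow_lt hm
      _ = 4 * (m : ℝ) ^ 2 * c := by ring
      _ ≤ ∑ W, (mL (A W) (B W) : ℝ) := (le_div_iff₀ hc).1 havg
  have hmL (W) : mL (A W) (B W) ≤ 4 ^ m := by
    simpa only [Nat.card_fin] using mL_le_four_pow (hAB W)
  obtain ⟨s, hs⟩ := exists_lt_mul_ncard_le hmL hsum
  refine ⟨{W | s ≤ mL (A W) (B W)}, s, ⟨fun W hW => ?_, ?_⟩⟩
  · simpa using hW
  · rwa [unrevealed_empty, projDensity_matSet_univ, ← mul_div_assoc, lt_div_iff₀ hc]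

/-- Fixing the rows in `I` costs a factor `2 ^ |I|` in complexity and another one in the number of
matrices, while forgetting these rows gains a factor more than `4 ^ |I|` in density. -/
theorem exists_reveal (h : IsRevealState A B R α WW τ)
    (hAB : ∀ W, ∀ a ∈ A W, ∀ b ∈ B W, ¬a ≤ b) {I : Set (Fin m)} (hI : I ⊆ Rᶜ)
    (hlow : rAvgDeg (projSet (matSet WW) (unrevealed (Fin ℓ) R)) {q | q.val.1 ∈ I} <
      (1 / 4 : ℝ) ^ I.ncard) :
    ∃ α' WW' τ', IsRevealState A B (R ∪ I) α' WW' τ' := by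
  have hgain := h.projDensity_lt_mul_of_rAvgDeg_lt hlow
  obtain ⟨β, WW', hWW', hcard, hmL⟩ := exists_mL_le_mul_mL_inter_eqOn
    (A := fun W => A W ∩ {a | Set.EqOn a α R})
    (fun (W : Fin m → Fin ℓ → Λ) (j : unrevealed (Fin ℓ) (R ∪ I)) => W j.val.1 j.val.2)
    (fun W a ha => hAB W a ha.1) WW I
  rw [← projSet_matSet, ← projSet_matSet] at hcard
  have hdensity : projDensity (matSet WW) (unrevealed (Fin ℓ) (R ∪ I)) ≤
      2 ^ I.ncard * projDensity (matSet WW') (unrevealed (Fin ℓ) (R ∪ I)) := by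
    rw [projDensity, projDensity, ← mul_div_assoc]
    gcongr
    exact_mod_cast hcard
  have hcandidates (W) : A W ∩ {a | Set.EqOn a (I.piecewise β α) (R ∪ I)} =
      A W ∩ {a | Set.EqOn a α R} ∩ {a | Set.EqOn a β I} := by
    ext a
    simp only [Set.mem_inter_iff, Set.mem_ofPred_eq, eqOn_piecewise_union_iff hI, and_assoc]
  refine ⟨I.piecewise β α, WW', τ / 2 ^ I.ncard, ⟨fun W hW => ?_, ?_⟩⟩
  · rw [hcandidates, div_le_iff₀' (by positivity)]
    exact (h.le_mL W (hWW' hW)).trans (by exact_mod_cast hmL W hW)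
  · calc (m : ℝ) < τ * projDensity (matSet WW) (unrevealed (Fin ℓ) R) := h.lt_mul_projDensity
      _ ≤ τ * ((1 / 4) ^ I.ncard *
          (2 ^ I.ncard * projDensity (matSet WW') (unrevealed (Fin ℓ) (R ∪ I)))) := by
        have := h.pos.le
        gcongr
        exact hgain.le.trans (by gcongr)
      _ = τ / 2 ^ I.ncard * projDensity (matSet WW') (unrevealed (Fin ℓ) (R ∪ I)) := by
        rw [show (1 / 4 : ℝ) = 1 / 2 * (1 / 2) by norm_num, mul_pow, one_div_pow]
        field_simp

end IsRevealState

theorem iterative_procedure_output_general {m ℓ : ℕ} [NeZero m] {Λ : Type} [Fintype Λ] [Nonempty Λ]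
    (A B : (Fin m → Fin ℓ → Λ) → Set (Fin m → Bool)) (hAB : ∀ W, ∀ a ∈ A W, ∀ b ∈ B W, ¬a ≤ b)
    (havg : 4 * (m : ℝ) ^ 2 ≤
      (∑ W, (mL (A W) (B W) : ℝ)) / (Fintype.card (Fin m → Fin ℓ → Λ) : ℝ)) :
    ∃ (WW : Set (Fin m → Fin ℓ → Λ)) (R : Set (Fin m))
      (AA : (Fin m → Fin ℓ → Λ) → Set (Fin m → Bool)) (α : Fin m → Bool),
      (∀ W ∈ WW, (AA W).Nonempty ∧ AA W ⊆ A W) ∧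
      (∀ I : Set (Fin m), I ⊆ Rᶜ →
        ((1 : ℝ) / 4) ^ I.ncard ≤
          rAvgDeg (projSet (matSet WW) {p : Fin m × Fin ℓ | p.1 ∉ R})
            {q : ↥{p : Fin m × Fin ℓ | p.1 ∉ R} | q.val.1 ∈ I}) ∧
      (∀ W ∈ WW, ∀ a ∈ AA W, ∀ i ∈ R, a i = α i) ∧
      (∀ W ∈ WW, m < mL (AA W) (B W)) := by
  obtain ⟨R, ⟨α, WW, τ, h⟩, hmax⟩ :=
    (Set.toFinite {R | ∃ α WW τ, IsRevealState A B R α WW τ}).exists_maximal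
      ⟨∅, _, IsRevealState.exists_initial hAB havg fun _ => false⟩
  refine ⟨WW, R, fun W => A W ∩ {a | Set.EqOn a α R}, α, fun W hW => ⟨?_, Set.inter_subset_left⟩,
    fun I hI => ?_, fun W _ a ha => ha.2, fun W hW => h.lt_mL hW⟩
  · by_contra! hempty
    exact ((h.lt_mL hW).trans_le (hempty ▸ mL_empty_left_le_one)).not_ge NeZero.one_le
  · by_contra! hlow
    have hsub : R ∪ I ⊆ R := hmax (h.exists_reveal hAB hI hlow) Set.subset_union_left
    obtain rfl : I = ∅ := Set.subset_empty_iff.1 fun i hi => hI hi (hsub (Or.inr hi))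
    rw [rAvgDeg_projSet, unrevealed_diff_image, Set.union_empty, div_self h.projDensity_pos.ne',
      Set.ncard_empty, pow_zero] at hlow
    exact lt_irrefl _ hlow

theorem not_le_of_mem_Aset_of_mem_Bset {m ℓ : ℕ} {Λ O : Type} {f : (Fin m → Bool) → Bool}
    (hf : Monotone f)
    {Pr : Protocol ((Fin m → Fin ℓ → Λ) × {a : Fin m → Bool // f a = true})
      ((Fin m → Fin ℓ → Λ) × {b : Fin m → Bool // f b = false}) (Fin m × O)}
    {π : List Bool} {W : Fin m → Fin ℓ → Λ} {a b : Fin m → Bool}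
    (ha : a ∈ Aset f Pr π W) (hb : b ∈ Bset f Pr π W) : ¬a ≤ b := by
  obtain ⟨ha, -⟩ := ha
  obtain ⟨hb, -⟩ := hb
  intro hab
  simpa [ha, hb, Bool.le_iff_imp] using hf hab

/-- For every live transcript `π₁` there exist a set of matrices
`𝒲`, a set of revealed rows `R`, and nonempty candidate sets `𝒜^W ⊆ 𝒜_{π₁,W}`,
such that (1) the unrevealed rows of `𝒲` have large relative average degree,
(2) all candidate vectors agree with a fixed string `α` on `R`, and
(3) `mL(𝒜^W × ℬ_{π₁,W}) > m` for every `W ∈ 𝒲`. -/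
theorem iterative_procedure_output (m ℓ t : ℕ) (O : Type)
    (f : (Fin m → Bool) → Bool) (S : (Fin ℓ → Bool) → O → Prop)
    (gd : (Fin t → Bool) → (Fin t → Bool) → Bool)
    (hf : Monotone f) (hf1 : ∃ x, f x = true) (hf0 : ∃ x, f x = false)
    (Pr : Protocol
        ((Fin m → Fin ℓ → (Fin t → Bool)) × {a : Fin m → Bool // f a = true})
        ((Fin m → Fin ℓ → (Fin t → Bool)) × {b : Fin m → Bool // f b = false})
        (Fin m × O))
    (hPr : Solves Pr (starLift f S gd))
    (π₁ : List Bool) (hlive : LiveT f Pr π₁) :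
    ∃ (WW : Set (Fin m → Fin ℓ → (Fin t → Bool))) (R : Set (Fin m))
      (AA : (Fin m → Fin ℓ → (Fin t → Bool)) → Set (Fin m → Bool))
      (α : Fin m → Bool),
      (∀ W ∈ WW, (AA W).Nonempty ∧ AA W ⊆ Aset f Pr π₁ W) ∧
      (∀ I : Set (Fin m), I ⊆ Rᶜ →
        ((1 : ℝ) / 4) ^ I.ncard ≤
          rAvgDeg (projSet (matSet WW) {p : Fin m × Fin ℓ | p.1 ∉ R})
            {q : ↥{p : Fin m × Fin ℓ | p.1 ∉ R} | q.val.1 ∈ I}) ∧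
      (∀ W ∈ WW, ∀ a ∈ AA W, ∀ i ∈ R, a i = α i) ∧
      (∀ W ∈ WW, m < mL (AA W) (Bset f Pr π₁ W)) := by
  obtain ⟨x, hx⟩ := hf1
  obtain ⟨y, hy⟩ := hf0
  have : NeZero m := ⟨by rintro rfl; simp [Subsingleton.elim x y, hy] at hx⟩
  exact iterative_procedure_output_general _ _
    (fun _ _ ha _ hb => not_le_of_mem_Aset_of_mem_Bset hf ha hb) hlive.2
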